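/- Let k have prime characteristic p > 2, let V = kv ⊕ kw, and let G = ⟨g⟩ be the cyclic group of order p acting on V by ᵍv = v, ᵍw = v + w. Define λ(g^i, v) = i g^i for all i, λ(1, w) = λ(g, w) = 0, and λ(g^i, w) = binom(i,2) g^i for i ≥ 2. Then H_{λ,0} is a PBW deformation of S(V)⋊G, but there is no bilinear parameter function κ': V×V → kG ⊕ (V⊗kG) such that H_{λ,0} ≅ H_{0,κ'} as filtered algebras. In particular, the nonmodular untwisting theorem fails in the modular setting. -/

import Mathlib

open TensorProduct

noncomputable section

namespace DeformKoszul

variable (k G V : Type) [Field k] [Group G] [AddCommGroup V] [Module k V]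

/-- The free `k`-algebra on the vector space `kG ⊕ V`. -/
abbrev FreeAlg := TensorAlgebra k (MonoidAlgebra k G × V)

/-- The canonical embedding of the group algebra `kG` into the free algebra. -/
def gIn : MonoidAlgebra k G →ₗ[k] FreeAlg k G V :=
  (TensorAlgebra.ι k).comp (LinearMap.inl k (MonoidAlgebra k G) V)

/-- The canonical embedding of `V` into the free algebra. -/
def vIn : V →ₗ[k] FreeAlg k G V :=
  (TensorAlgebra.ι k).comp (LinearMap.inr k (MonoidAlgebra k G) V)

/-- `V ⊗ kG → FreeAlg`, `v ⊗ x ↦ v·x`. -/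
def embVG : V ⊗[k] MonoidAlgebra k G →ₗ[k] FreeAlg k G V :=
  (LinearMap.mul' k _).comp (TensorProduct.map (vIn k G V) (gIn k G V))

variable (ρ : Representation k G V)

/-- The defining relations of `H_{λ,κ}`: `kG` is a subalgebra (with the same unit),
`g·v = (ᵍv)·g + λ(g,v)`, and `v·w = w·v + κ^L(v,w) + κ^C(v,w)`. -/
inductive PRel (lam : G → V →ₗ[k] MonoidAlgebra k G)
    (κC : V →ₗ[k] V →ₗ[k] MonoidAlgebra k G)
    (κL : V →ₗ[k] V →ₗ[k] (V ⊗[k] MonoidAlgebra k G)) :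
    FreeAlg k G V → FreeAlg k G V → Prop
  | unit : PRel lam κC κL (gIn k G V 1) 1
  | gmul (x y : MonoidAlgebra k G) :
      PRel lam κC κL (gIn k G V x * gIn k G V y) (gIn k G V (x * y))
  | act (g : G) (v : V) :
      PRel lam κC κL (gIn k G V (MonoidAlgebra.of k G g) * vIn k G V v)
        (vIn k G V (ρ g v) * gIn k G V (MonoidAlgebra.of k G g) + gIn k G V (lam g v))
  | comm (v w : V) :
      PRel lam κC κL (vIn k G V v * vIn k G V w)
        (vIn k G V w * vIn k G V v + embVG k G V (κL v w) + gIn k G V (κC v w))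

variable (lam : G → V →ₗ[k] MonoidAlgebra k G)
    (κC : V →ₗ[k] V →ₗ[k] MonoidAlgebra k G)
    (κL : V →ₗ[k] V →ₗ[k] (V ⊗[k] MonoidAlgebra k G))

/-- The algebra `H_{λ,κ}`.  For `lam = 0`, `κC = 0`, `κL = 0` this is (the presentation
of) the skew group algebra `S(V) ⋊ G`. -/
abbrev HP := RingQuot (PRel k G V ρ lam κC κL)

/-- The quotient map onto `H_{λ,κ}`. -/
def toHP : FreeAlg k G V →ₐ[k] HP k G V ρ lam κC κL :=
  RingQuot.mkAlgHom k (PRel k G V ρ lam κC κL)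

/-- Degree-`n` part of the free algebra: `kG` has degree 0 and `V` degree 1. -/
def grT : ℕ → Submodule k (FreeAlg k G V)
  | 0 => Subalgebra.toSubmodule (Algebra.adjoin k (Set.range (gIn k G V)))
  | n+1 => grT n * (LinearMap.range (vIn k G V) * grT 0)

/-- Filtration of the free algebra, `kG` in degree 0 and `V` in degree 1. -/
def filtT : ℕ → Submodule k (FreeAlg k G V)
  | 0 => grT k G V 0
  | n+1 => filtT n ⊔ grT k G V (n+1)

/-- The induced filtration on `H_{λ,κ}`. -/
def filtP (d : ℕ) : Submodule k (HP k G V ρ lam κC κL) :=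
  (filtT k G V d).map (toHP k G V ρ lam κC κL).toLinearMap

/-- `H_{λ,κ}` is a PBW deformation of `S(V) ⋊ G`:  the associated graded algebra is
`S(V) ⋊ G`, equivalently (all filtered pieces being finite dimensional) each filtered
piece has the same dimension as the corresponding one of `S(V) ⋊ G = H_{0,0}`. -/
def IsPBWP : Prop :=
  ∀ d, Module.finrank k (filtP k G V ρ lam κC κL d) = Module.finrank k (filtP k G V ρ 0 0 0 d)

section Example8


variable (k : Type) [Field k] (p : ℕ) [Fact p.Prime] [CharP k p]

/-- scalar of `x = gⁱ`, namely `i` viewed in `k` (well defined since `char k = p`). -/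
def cf (x : Multiplicative (ZMod p)) : k := ZMod.castHom (dvd_refl p) k x.toAdd

lemma cf_mul (x y : Multiplicative (ZMod p)) : cf k p (x * y) = cf k p x + cf k p y := by
  simp [cf, toAdd_mul, map_add]

lemma cf_one : cf k p 1 = 0 := by simp [cf]

/-- the distinguished generator `g` of the cyclic group of order `p`. -/
def gg : Multiplicative (ZMod p) := Multiplicative.ofAdd 1


/-- the nilpotent part on `k²`: `f ↦ f(1)·e₀`. -/
def E2 : (Fin 2 → k) →ₗ[k] (Fin 2 → k) :=
  (LinearMap.single k (fun _ => k) 0).comp (LinearMap.proj 1)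

lemma E2sq : (E2 k) * (E2 k) = 0 := by
  ext f i
  simp [E2, Module.End.mul_apply, Pi.single_apply]

/-- the representation of `G = ⟨g⟩ ≅ ℤ/p` on `V = kv ⊕ kw` with `ᵍv = v`,
`ᵍw = v + w` (so `v = e₀`, `w = e₁`). -/
def ρ2 : Representation k (Multiplicative (ZMod p)) (Fin 2 → k) where
  toFun x := 1 + cf k p x • E2 k
  map_one' := by simp [cf_one]
  map_mul' x y := by
    show 1 + cf k p (x * y) • E2 k = (1 + cf k p x • E2 k) * (1 + cf k p y • E2 k)
    rw [cf_mul, add_smul, mul_add, add_mul, add_mul, mul_one, one_mul, smul_mul_smul_comm,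
      E2sq, smul_zero]
    simp only [mul_one]
    abel

/-- `λ(gⁱ, v) = i·gⁱ`, `λ(1,w) = λ(g,w) = 0`, `λ(gⁱ, w) = (i choose 2)·gⁱ = (i(i−1)/2)·gⁱ`. -/
def lam8 : Multiplicative (ZMod p) → (Fin 2 → k) →ₗ[k] MonoidAlgebra k (Multiplicative (ZMod p)) :=
  fun x =>
    (LinearMap.proj 0 : ((Fin 2 → k)) →ₗ[k] k).smulRight
      (cf k p x • MonoidAlgebra.single x (1 : k))
    + (LinearMap.proj 1 : ((Fin 2 → k)) →ₗ[k] k).smulRight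
      ((cf k p x * (cf k p x - 1) / 2) • MonoidAlgebra.single x (1 : k))

end Example8

end DeformKoszul

namespace DeformKoszul
section Pf
set_option linter.unusedSectionVars false
variable (k : Type) [Field k] (p : ℕ) [Fact p.Prime] [CharP k p]

abbrev GG := Multiplicative (ZMod p)
abbrev VV := Fin 2 → k
abbrev AA := MvPolynomial (Fin 2) k
abbrev MM := GG p →₀ AA k

open MvPolynomial in
def sg (c : k) (x : GG p) : AA k →ₐ[k] AA k :=
  aeval ![X 0 + C (c * cf k p x), X 1 + C (cf k p x) * X 0 + C (c * (cf k p x * (cf k p x - 1) / 2))]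

open MvPolynomial in
lemma sg_X0 (c : k) (x : GG p) : sg k p c x (X 0) = X 0 + C (c * cf k p x) := by
  simp [sg]

open MvPolynomial in
lemma sg_X1 (c : k) (x : GG p) : sg k p c x (X 1) =
    X 1 + C (cf k p x) * X 0 + C (c * (cf k p x * (cf k p x - 1) / 2)) := by
  simp [sg]

open MvPolynomial in
lemma sg_one (c : k) : sg k p c 1 = AlgHom.id k _ := by
  apply MvPolynomial.algHom_ext
  intro i
  fin_cases i
  · simp [sg_X0, cf_one]
  · simp [sg_X1, cf_one]

open MvPolynomial in
lemma sg_mul (h2 : (2 : k) ≠ 0) (c : k) (x y : GG p) (f : AA k) :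
    sg k p c (x * y) f = sg k p c x (sg k p c y f) := by
  suffices h : sg k p c (x * y) = (sg k p c x).comp (sg k p c y) by rw [h]; rfl
  apply MvPolynomial.algHom_ext
  intro i
  have hC : ∀ a, sg k p c x (C a) = C a := fun a => by simp [sg]
  fin_cases i
  · simp only [AlgHom.comp_apply, Fin.mk_zero, sg_X0, map_add, cf_mul, hC]
    rw [add_assoc, ← C_add]; congr 2; ring
  · simp only [AlgHom.comp_apply, Fin.mk_one, sg_X1, sg_X0, map_add, map_mul, cf_mul, hC]
    have : c * ((cf k p x + cf k p y) * (cf k p x + cf k p y - 1) / 2)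
      = c * (cf k p x * (cf k p x - 1) / 2) + cf k p y * (c * cf k p x) + c * (cf k p y * (cf k p y - 1) / 2) := by
      field_simp; ring
    have h' := congrArg (C (σ := Fin 2)) this
    simp only [map_add, map_mul] at h' ⊢
    rw [h']
    ring

/-- multiplication operator -/
def Xop : AA k →ₗ[k] Module.End k (MM k p) where
  toFun f := Finsupp.mapRange.linearMap (LinearMap.mulLeft k f)
  map_add' f g := by
    refine LinearMap.ext fun m => Finsupp.ext fun x => ?_
    simp [add_mul]
  map_smul' a f := by
    refine LinearMap.ext fun m => Finsupp.ext fun x => ?_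
    simp

lemma Xop_single (f : AA k) (x : GG p) (a : AA k) :
    Xop k p f (Finsupp.single x a) = Finsupp.single x (f * a) := by
  simp [Xop]

/-- group operator -/
def Top (c : k) (x : GG p) : Module.End k (MM k p) :=
  Finsupp.lsum k (fun y => (Finsupp.lsingle (x * y)).comp (sg k p c x).toLinearMap)

lemma Top_single (c : k) (x y : GG p) (a : AA k) :
    Top k p c x (Finsupp.single y a) = Finsupp.single (x * y) (sg k p c x a) := by
  simp [Top]

lemma End_ext {f g : Module.End k (MM k p)}
    (h : ∀ x a, f (Finsupp.single x a) = g (Finsupp.single x a)) : f = g :=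
  Finsupp.lhom_ext h

def TopHom (h2 : (2 : k) ≠ 0) (c : k) : GG p →* Module.End k (MM k p) where
  toFun := Top k p c
  map_one' := End_ext k p fun x a => by simp [Top_single, sg_one]
  map_mul' x y := End_ext k p fun z a => by
    simp [Top_single, sg_mul k p h2, mul_assoc]

def vlin : VV k →ₗ[k] AA k where
  toFun u := u 0 • MvPolynomial.X 0 + u 1 • MvPolynomial.X 1
  map_add' u v := by simp only [Pi.add_apply, add_smul]; abel
  map_smul' a u := by simp only [Pi.smul_apply, smul_eq_mul, mul_smul, smul_add, RingHom.id_apply]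

def freeRep (h2 : (2 : k) ≠ 0) (c : k) : FreeAlg k (GG p) (VV k) →ₐ[k] Module.End k (MM k p) :=
  TensorAlgebra.lift k (LinearMap.coprod
    (MonoidAlgebra.lift k (Module.End k (MM k p)) (GG p) (TopHom k p h2 c)).toLinearMap
    ((Xop k p).comp (vlin k)))

lemma freeRep_g (h2 : (2 : k) ≠ 0) (c : k) (a : MonoidAlgebra k (GG p)) :
    freeRep k p h2 c (gIn k _ _ a) = MonoidAlgebra.lift k (Module.End k (MM k p)) (GG p) (TopHom k p h2 c) a := by
  simp [freeRep, gIn]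

lemma freeRep_v (h2 : (2 : k) ≠ 0) (c : k) (u : VV k) :
    freeRep k p h2 c (vIn k _ _ u) = Xop k p (vlin k u) := by
  simp [freeRep, vIn]

lemma freeRep_of (h2 : (2 : k) ≠ 0) (c : k) (x : GG p) :
    freeRep k p h2 c (gIn k _ _ (MonoidAlgebra.of k _ x)) = Top k p c x := by
  rw [freeRep_g, MonoidAlgebra.lift_of]; rfl

lemma ρ2_apply (x : GG p) (u : VV k) : ρ2 k p x u = ![u 0 + cf k p x * u 1, u 1] := by
  show (1 + cf k p x • E2 k) u = _
  funext i
  fin_cases i <;> simp [E2]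

lemma lam8_apply (x : GG p) (u : VV k) : lam8 k p x u =
   (u 0 * cf k p x + u 1 * (cf k p x * (cf k p x - 1) / 2)) • MonoidAlgebra.of k (GG p) x := by
  simp [lam8, add_smul, MonoidAlgebra.of_apply]

lemma sg_vlin (c : k) (x : GG p) (u : VV k) : sg k p c x (vlin k u) =
    vlin k (ρ2 k p x u) + MvPolynomial.C (c * (u 0 * cf k p x + u 1 * (cf k p x * (cf k p x - 1) / 2))) := by
  have hC : ∀ a, sg k p c x (MvPolynomial.C a) = MvPolynomial.C a := fun a => by simp [sg]
  simp only [vlin, LinearMap.coe_mk, AddHom.coe_mk, map_add, hC, sg_X0, sg_X1, ρ2_apply,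
    MvPolynomial.smul_eq_C_mul, map_mul, Matrix.cons_val_zero, Matrix.cons_val_one]
  ring

def rep (h2 : (2 : k) ≠ 0) (c : k) :
    HP k (GG p) (VV k) (ρ2 k p) (c • lam8 k p) 0 0 →ₐ[k] Module.End k (MM k p) :=
  RingQuot.liftAlgHom k ⟨freeRep k p h2 c, by
    intro a b hab
    cases hab with
    | unit => rw [freeRep_g]; simp
    | gmul x y => simp [freeRep_g]
    | act x u =>
      rw [map_mul, map_add, map_mul, freeRep_of, freeRep_v, freeRep_v]
      simp only [Pi.smul_apply, LinearMap.smul_apply, lam8_apply, map_smul, freeRep_of]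
      refine End_ext k p fun y a => ?_
      simp only [Module.End.mul_apply, LinearMap.add_apply, LinearMap.smul_apply, Xop_single, Top_single,
        map_mul, sg_vlin, add_mul, Finsupp.single_add, smul_smul, Finsupp.smul_single, MvPolynomial.smul_eq_C_mul]
    | comm u v =>
      simp only [map_mul, freeRep_v, LinearMap.zero_apply, map_zero, add_zero]
      refine End_ext k p fun y a => ?_
      simp only [Module.End.mul_apply, Xop_single]
      congr 1; ring⟩

lemma rep_toHP (h2 : (2 : k) ≠ 0) (c : k) (t : FreeAlg k (GG p) (VV k)) :
    rep k p h2 c (toHP k _ _ _ _ _ _ t) = freeRep k p h2 c t := by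
  simp only [rep, toHP, RingQuot.liftAlgHom_mkAlgHom_apply]

lemma exists_F {R : Type} [Ring R] [Algebra k R] (a b : R) (h : a * b = b * a) :
    ∃ F : AA k →ₐ[k] R, F (MvPolynomial.X 0) = a ∧ F (MvPolynomial.X 1) = b := by
  have hc : ∀ x ∈ ({a, b} : Set R), ∀ y ∈ ({a, b} : Set R), x * y = y * x := by
    rintro x (rfl | rfl) y (rfl | rfl) <;> simp [h]
  have hm := Algebra.isMulCommutative_adjoin k hc
  open scoped IsMulCommutative in
  refine ⟨(Algebra.adjoin k ({a, b} : Set R)).val.comp (MvPolynomial.aeval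
    ![⟨a, Algebra.subset_adjoin (by simp)⟩, ⟨b, Algebra.subset_adjoin (by simp)⟩]), ?_, ?_⟩ <;> simp

/-- classes of the generators -/
def gH (lam : GG p → VV k →ₗ[k] MonoidAlgebra k (GG p)) (κC : VV k →ₗ[k] VV k →ₗ[k] MonoidAlgebra k (GG p))
    (κL : VV k →ₗ[k] VV k →ₗ[k] (VV k ⊗[k] MonoidAlgebra k (GG p))) (x : GG p) :
    HP k (GG p) (VV k) (ρ2 k p) lam κC κL :=
  toHP k _ _ _ _ _ _ (gIn k _ _ (MonoidAlgebra.of k _ x))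

def vH (lam : GG p → VV k →ₗ[k] MonoidAlgebra k (GG p)) (κC : VV k →ₗ[k] VV k →ₗ[k] MonoidAlgebra k (GG p))
    (κL : VV k →ₗ[k] VV k →ₗ[k] (VV k ⊗[k] MonoidAlgebra k (GG p))) :
    VV k →ₗ[k] HP k (GG p) (VV k) (ρ2 k p) lam κC κL :=
  (toHP k _ _ _ _ _ _).toLinearMap.comp (vIn k _ _)

section gen
variable (lam : GG p → VV k →ₗ[k] MonoidAlgebra k (GG p)) (κC : VV k →ₗ[k] VV k →ₗ[k] MonoidAlgebra k (GG p))
    (κL : VV k →ₗ[k] VV k →ₗ[k] (VV k ⊗[k] MonoidAlgebra k (GG p)))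

lemma toHP_rel {a b : FreeAlg k (GG p) (VV k)} (h : PRel k _ _ (ρ2 k p) lam κC κL a b) :
    toHP k _ _ (ρ2 k p) lam κC κL a = toHP k _ _ _ _ _ _ b :=
  RingQuot.mkAlgHom_rel k h

lemma gH_one : gH k p lam κC κL 1 = 1 := by
  unfold gH
  rw [map_one, toHP_rel k p lam κC κL PRel.unit, map_one]

lemma gH_mul (x y : GG p) : gH k p lam κC κL (x * y) = gH k p lam κC κL x * gH k p lam κC κL y := by
  unfold gH
  rw [← map_mul, toHP_rel k p lam κC κL (PRel.gmul _ _), map_mul]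

lemma gH_vH (x : GG p) (u : VV k) : gH k p lam κC κL x * vH k p lam κC κL u =
    vH k p lam κC κL (ρ2 k p x u) * gH k p lam κC κL x + toHP k _ _ _ _ _ _ (gIn k _ _ (lam x u)) := by
  have := toHP_rel k p lam κC κL (PRel.act x u)
  rwa [map_mul, map_add, map_mul] at this

end gen

lemma vH_comm (lam : GG p → VV k →ₗ[k] MonoidAlgebra k (GG p)) (u v : VV k) :
    vH k p lam 0 0 u * vH k p lam 0 0 v = vH k p lam 0 0 v * vH k p lam 0 0 u := by
  have := toHP_rel k p lam 0 0 (PRel.comm u v)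
  simp only [LinearMap.zero_apply, map_zero, add_zero, map_mul] at this
  exact this

lemma exists_F2 (lam : GG p → VV k →ₗ[k] MonoidAlgebra k (GG p)) :
    ∃ F : AA k →ₐ[k] HP k (GG p) (VV k) (ρ2 k p) lam 0 0, ∀ u, F (vlin k u) = vH k p lam 0 0 u := by
  obtain ⟨F, h0, h1⟩ := exists_F k _ _ (vH_comm k p lam (Pi.single 0 1) (Pi.single 1 1))
  refine ⟨F, fun u => ?_⟩
  simp only [vlin, LinearMap.coe_mk, AddHom.coe_mk, map_add, map_smul, h0, h1]
  rw [← map_smul, ← map_smul, ← map_add]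
  congr 1
  funext i
  fin_cases i <;> simp

lemma X0_eq : (MvPolynomial.X 0 : AA k) = vlin k (Pi.single 0 1) := by simp [vlin]
lemma X1_eq : (MvPolynomial.X 1 : AA k) = vlin k (Pi.single 1 1) := by simp [vlin]

lemma X_eq (i : Fin 2) : (MvPolynomial.X i : AA k) = vlin k (Pi.single i 1) := by
  fin_cases i
  · exact X0_eq k
  · exact X1_eq k

lemma gF (c : k) (F : AA k →ₐ[k] HP k (GG p) (VV k) (ρ2 k p) (c • lam8 k p) 0 0)
    (hF : ∀ u, F (vlin k u) = vH k p _ 0 0 u) (x : GG p) (f : AA k) :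
    gH k p _ 0 0 x * F f = F (sg k p c x f) * gH k p _ 0 0 x := by
  induction f using MvPolynomial.induction_on with
  | C a =>
    have h1 : sg k p c x (MvPolynomial.C a) = MvPolynomial.C a := by simp [sg]
    rw [h1, ← MvPolynomial.algebraMap_eq, AlgHom.commutes]
    exact (Algebra.commutes _ _).symm
  | add f g hf hg => simp only [map_add, mul_add, add_mul, hf, hg]
  | mul_X f i hf =>
    rw [map_mul, ← mul_assoc, hf, mul_assoc, map_mul, map_mul, mul_assoc]
    congr 1
    rw [X_eq, hF, gH_vH, sg_vlin, map_add, hF, add_mul]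
    congr 1
    simp only [Pi.smul_apply, LinearMap.smul_apply, lam8_apply, map_smul]
    rw [← MvPolynomial.algebraMap_eq, AlgHom.commutes, ← Algebra.smul_def, smul_smul]
    rfl

def psi (c : k) (F : AA k →ₐ[k] HP k (GG p) (VV k) (ρ2 k p) (c • lam8 k p) 0 0) :
    MM k p →ₗ[k] HP k (GG p) (VV k) (ρ2 k p) (c • lam8 k p) 0 0 :=
  Finsupp.lsum k (fun x => (LinearMap.mulRight k (gH k p _ 0 0 x)).comp F.toLinearMap)

lemma psi_single (c : k) (F : AA k →ₐ[k] HP k (GG p) (VV k) (ρ2 k p) (c • lam8 k p) 0 0) (x f) :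
    psi k p c F (Finsupp.single x f) = F f * gH k p _ 0 0 x := by
  simp [psi]

lemma toHP_surj (lam κC κL) : Function.Surjective (toHP k (GG p) (VV k) (ρ2 k p) lam κC κL) :=
  RingQuot.mkAlgHom_surjective k _

lemma psi_rep (h2 : (2 : k) ≠ 0) (c : k) (F : AA k →ₐ[k] HP k (GG p) (VV k) (ρ2 k p) (c • lam8 k p) 0 0)
    (hF : ∀ u, F (vlin k u) = vH k p _ 0 0 u) (t : FreeAlg k (GG p) (VV k)) (m : MM k p) :
    psi k p c F (freeRep k p h2 c t m) = toHP k _ _ _ _ _ _ t * psi k p c F m := by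
  induction t using TensorAlgebra.induction generalizing m with
  | algebraMap r =>
    rw [AlgHom.commutes, AlgHom.commutes, ← Algebra.smul_def, Module.algebraMap_end_apply, map_smul]
  | add a b ha hb => simp only [map_add, LinearMap.add_apply, ha, hb, add_mul]
  | mul a b ha hb => rw [map_mul, Module.End.mul_apply, ha, hb, map_mul, mul_assoc]
  | ι q =>
    obtain ⟨a, u⟩ := q
    have hq : TensorAlgebra.ι k (a, u) = gIn k (GG p) (VV k) a + vIn k (GG p) (VV k) u := by
      simp [gIn, vIn, ← map_add]
    rw [hq, map_add, map_add, add_mul, LinearMap.add_apply, map_add]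
    congr 1
    · induction a using MonoidAlgebra.induction_linear with
      | zero => simp
      | add f g hf hg =>
        simp only [map_add, LinearMap.add_apply, add_mul]
        rw [hf, hg]
        · simp [gIn, vIn, ← map_add]
        · simp [gIn, vIn, ← map_add]
      | single x r =>
        rw [MonoidAlgebra.single_eq_algebraMap_mul_of, Algebra.algebraMap_eq_smul_one, smul_mul_assoc, one_mul,
          map_smul, map_smul, map_smul, LinearMap.smul_apply, map_smul, smul_mul_assoc]
        congr 1
        rw [freeRep_of]
        suffices h : (psi k p c F).comp (Top k p c x) =
            (LinearMap.mulLeft k (gH k p _ 0 0 x)).comp (psi k p c F) from LinearMap.congr_fun h m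
        refine Finsupp.lhom_ext fun y f => ?_
        simp only [LinearMap.comp_apply, Top_single, psi_single, LinearMap.mulLeft_apply, gH_mul,
          ← mul_assoc, gF k p c F hF]
    · rw [freeRep_v]
      suffices h : (psi k p c F).comp (Xop k p (vlin k u)) =
            (LinearMap.mulLeft k (vH k p _ 0 0 u)).comp (psi k p c F) from LinearMap.congr_fun h m
      refine Finsupp.lhom_ext fun y f => ?_
      simp only [LinearMap.comp_apply, Xop_single, psi_single, LinearMap.mulLeft_apply, map_mul, hF, mul_assoc]

def ev (h2 : (2 : k) ≠ 0) (c : k) :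
    HP k (GG p) (VV k) (ρ2 k p) (c • lam8 k p) 0 0 →ₗ[k] MM k p :=
  (LinearMap.applyₗ (Finsupp.single 1 1 : MM k p)).comp (rep k p h2 c).toLinearMap

lemma ev_toHP (h2 : (2 : k) ≠ 0) (c : k) (t : FreeAlg k (GG p) (VV k)) :
    ev k p h2 c (toHP k _ _ _ _ _ _ t) = freeRep k p h2 c t (Finsupp.single 1 1) := by
  simp [ev, rep_toHP]

lemma psi_ev (h2 : (2 : k) ≠ 0) (c : k) (F : AA k →ₐ[k] HP k (GG p) (VV k) (ρ2 k p) (c • lam8 k p) 0 0)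
    (hF : ∀ u, F (vlin k u) = vH k p _ 0 0 u) (h) : psi k p c F (ev k p h2 c h) = h := by
  obtain ⟨t, rfl⟩ := toHP_surj k p _ _ _ h
  rw [ev_toHP, psi_rep k p h2 c F hF, psi_single, map_one, one_mul, gH_one, mul_one]

lemma ev_injective (h2 : (2 : k) ≠ 0) (c : k) : Function.Injective (ev k p h2 c) := by
  obtain ⟨F, hF⟩ := exists_F2 k p (c • lam8 k p)
  exact Function.LeftInverse.injective (psi_ev k p h2 c F hF)

lemma ev_mul (h2 : (2 : k) ≠ 0) (c : k) (a b) : ev k p h2 c (a * b) = rep k p h2 c a (ev k p h2 c b) := by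
  simp [ev]

lemma ev_psi (h2 : (2 : k) ≠ 0) (c : k) (F : AA k →ₐ[k] HP k (GG p) (VV k) (ρ2 k p) (c • lam8 k p) 0 0)
    (hF : ∀ u, F (vlin k u) = vH k p _ 0 0 u) (m) : ev k p h2 c (psi k p c F m) = m := by
  suffices h : (ev k p h2 c).comp (psi k p c F) = LinearMap.id from LinearMap.congr_fun h m
  have hFX : ∀ f, rep k p h2 c (F f) = Xop k p f := by
    intro f
    induction f using MvPolynomial.induction_on with
    | C a =>
      rw [← MvPolynomial.algebraMap_eq, AlgHom.commutes, AlgHom.commutes]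
      refine End_ext k p fun x f => ?_
      simp [Xop_single, MvPolynomial.smul_eq_C_mul]
    | add f g hf hg => simp only [map_add, hf, hg]
    | mul_X f i hf =>
      rw [map_mul, map_mul, hf, X_eq, hF]
      have : rep k p h2 c (vH k p _ 0 0 (Pi.single i 1)) = Xop k p (vlin k (Pi.single i 1)) := by
        rw [← freeRep_v k p h2 c, ← rep_toHP]; rfl
      rw [this]
      refine End_ext k p fun x f => ?_
      simp only [Module.End.mul_apply, Xop_single, mul_assoc]
  refine Finsupp.lhom_ext fun x f => ?_
  rw [LinearMap.comp_apply, psi_single, ev_mul, hFX]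
  unfold gH
  rw [ev_toHP, freeRep_of, Top_single, Xop_single]
  simp

section fr
variable (K G V : Type) [Field K] [Group G] [AddCommGroup V] [Module K V]
lemma grT_zero : grT K G V 0 = Subalgebra.toSubmodule (Algebra.adjoin K (Set.range (gIn K G V))) := by
  rw [grT]

lemma grT_succ (n : ℕ) : grT K G V (n+1) = grT K G V n * (LinearMap.range (vIn K G V) * grT K G V 0) := by
  conv_lhs => rw [grT]

lemma gIn_mem (a) : gIn K G V a ∈ grT K G V 0 := by
  rw [grT_zero]; exact Algebra.subset_adjoin ⟨a, rfl⟩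

lemma one_le_grT0 : (1 : Submodule K (FreeAlg K G V)) ≤ grT K G V 0 :=
  Submodule.one_le.2 (by rw [grT_zero]; exact one_mem (Algebra.adjoin K (Set.range (gIn K G V))))

lemma grT0_mul : grT K G V 0 * grT K G V 0 = grT K G V 0 := by
  rw [grT_zero]; exact Subalgebra.isIdempotentElem_toSubmodule _

lemma grT_mul0 (n : ℕ) : grT K G V n * grT K G V 0 = grT K G V n := by
  cases n with
  | zero => exact grT0_mul K G V
  | succ n => rw [grT_succ, mul_assoc, mul_assoc, grT0_mul]

lemma filtT_mul0 (n : ℕ) : filtT K G V n * grT K G V 0 = filtT K G V n := by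
  induction n with
  | zero => exact grT0_mul K G V
  | succ n ih => rw [filtT, Submodule.sup_mul, ih, grT_mul0]

lemma filtT_mulV (n : ℕ) : filtT K G V n * (LinearMap.range (vIn K G V) * grT K G V 0) ≤ filtT K G V (n+1) := by
  induction n with
  | zero =>
    rw [filtT, filtT, grT_succ]; exact le_sup_right
  | succ n ih =>
    conv_lhs => rw [filtT]
    rw [Submodule.sup_mul]
    conv_rhs => rw [filtT, grT_succ]
    exact sup_le_sup ih le_rfl

lemma one_mem_filtT (n : ℕ) : (1 : FreeAlg K G V) ∈ filtT K G V n := by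
  induction n with
  | zero => exact Submodule.one_le.1 (one_le_grT0 K G V)
  | succ n ih => exact Submodule.mem_sup_left ih
end fr

def PP : Submodule k (AA k) := 1 ⊔ LinearMap.range (vlin k)

lemma one_mem_PP_pow (n : ℕ) : (1 : Submodule k (AA k)) ≤ PP k ^ n :=
  one_le_pow_of_one_le' le_sup_left n

lemma PP_mono {m n : ℕ} (h : m ≤ n) : PP k ^ m ≤ PP k ^ n := by
  obtain ⟨r, rfl⟩ := Nat.exists_eq_add_of_le h
  rw [pow_add]
  calc PP k ^ m = PP k ^ m * 1 := (mul_one _).symm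
    _ ≤ _ := mul_le_mul_right (one_mem_PP_pow k r) _

lemma sg_PP (c : k) (x : GG p) (n : ℕ) {f : AA k} (hf : f ∈ PP k ^ n) : sg k p c x f ∈ PP k ^ n := by
  have h1 : (PP k).map (sg k p c x).toLinearMap ≤ PP k := by
    rw [PP, Submodule.map_sup, sup_le_iff]
    constructor
    · rw [Submodule.map_one]; exact le_sup_left
    · rintro _ ⟨_, ⟨u, rfl⟩, rfl⟩
      rw [AlgHom.toLinearMap_apply, sg_vlin]
      refine add_mem (Submodule.mem_sup_right ⟨_, rfl⟩) (Submodule.mem_sup_left ?_)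
      exact Submodule.mem_one.2 ⟨_, rfl⟩
  have h2 : (PP k ^ n).map (sg k p c x).toLinearMap ≤ PP k ^ n := by
    rw [Submodule.map_pow]
    exact pow_le_pow_left' h1 n
  exact h2 ⟨f, hf, rfl⟩

def SubM (d : ℕ) : Submodule k (MM k p) where
  carrier := {m | ∀ x, m x ∈ PP k ^ d}
  add_mem' ha hb x := add_mem (ha x) (hb x)
  zero_mem' _ := zero_mem _
  smul_mem' r _ ha x := Submodule.smul_mem _ r (ha x)

lemma single_mem_SubM {d : ℕ} {f : AA k} (hf : f ∈ PP k ^ d) (x : GG p) :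
    Finsupp.single x f ∈ SubM k p d := by
  intro y
  classical
  rw [Finsupp.single_apply]
  split_ifs
  · exact hf
  · exact zero_mem _

lemma SubM_induction {d : ℕ} {N : Type} [AddCommGroup N] [Module k N] (φ : MM k p →ₗ[k] N) (Q : Submodule k N)
    (h : ∀ x, ∀ f ∈ PP k ^ d, φ (Finsupp.single x f) ∈ Q) {m : MM k p} (hm : m ∈ SubM k p d) :
    φ m ∈ Q := by
  rw [← Finsupp.sum_single m, Finsupp.sum, map_sum]
  exact Submodule.sum_mem _ fun x _ => h x _ (hm x)

lemma SubM_mono {m n : ℕ} (h : m ≤ n) : SubM k p m ≤ SubM k p n :=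
  fun _ ha x => PP_mono k h (ha x)

lemma grT_zero_rep (h2 : (2 : k) ≠ 0) (c : k) (d : ℕ) {t : FreeAlg k (GG p) (VV k)}
    (ht : t ∈ grT k (GG p) (VV k) 0) {m : MM k p} (hm : m ∈ SubM k p d) :
    freeRep k p h2 c t m ∈ SubM k p d := by
  rw [grT_zero, Subalgebra.mem_toSubmodule] at ht
  induction ht using Algebra.adjoin_induction generalizing m with
  | mem t ht =>
    obtain ⟨a, rfl⟩ := ht
    induction a using MonoidAlgebra.induction_linear with
    | zero => simp
    | add f g hf hg =>
      simp only [map_add, LinearMap.add_apply]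
      exact add_mem hf hg
    | single x r =>
      rw [MonoidAlgebra.single_eq_algebraMap_mul_of, Algebra.algebraMap_eq_smul_one, smul_mul_assoc, one_mul,
          map_smul, map_smul, LinearMap.smul_apply]
      refine Submodule.smul_mem _ _ ?_
      rw [freeRep_of]
      refine SubM_induction k p _ _ (fun y f hf => ?_) hm
      rw [Top_single]
      exact single_mem_SubM k p (sg_PP k p c x d hf) _
  | algebraMap r =>
    rw [AlgHom.commutes, Module.algebraMap_end_apply]
    exact Submodule.smul_mem _ _ hm
  | add a b _ _ ha hb => rw [map_add]; exact add_mem (ha hm) (hb hm)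
  | mul a b _ _ ha hb => rw [map_mul]; exact ha (hb hm)

lemma grT_rep (h2 : (2 : k) ≠ 0) (c : k) (n d : ℕ) {t : FreeAlg k (GG p) (VV k)}
    (ht : t ∈ grT k (GG p) (VV k) n) {m : MM k p} (hm : m ∈ SubM k p d) :
    freeRep k p h2 c t m ∈ SubM k p (d + n) := by
  induction n generalizing t m d with
  | zero => exact grT_zero_rep k p h2 c d ht hm
  | succ n ih =>
    rw [grT_succ] at ht
    refine Submodule.mul_induction_on ht ?_ ?_
    · intro a ha b hb
      rw [map_mul, Module.End.mul_apply, show d + (n + 1) = d + 1 + n by ring]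
      refine ih _ ha ?_
      refine Submodule.mul_induction_on hb ?_ ?_
      · rintro _ ⟨u, rfl⟩ b hb
        rw [map_mul, Module.End.mul_apply, freeRep_v]
        refine SubM_induction k p _ _ (fun y f hf => ?_) (grT_zero_rep k p h2 c d hb hm)
        rw [Xop_single]
        refine single_mem_SubM k p ?_ _
        rw [pow_succ']
        exact Submodule.mul_mem_mul (Submodule.mem_sup_right ⟨_, rfl⟩) hf
      · intro x y hx hy
        rw [map_add]; exact add_mem hx hy
    · intro x y hx hy
      rw [map_add]; exact add_mem hx hy

lemma filtT_rep (h2 : (2 : k) ≠ 0) (c : k) (n : ℕ) {t : FreeAlg k (GG p) (VV k)}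
    (ht : t ∈ filtT k (GG p) (VV k) n) :
    freeRep k p h2 c t (Finsupp.single 1 1) ∈ SubM k p n := by
  have h1 : (Finsupp.single 1 1 : MM k p) ∈ SubM k p 0 :=
    single_mem_SubM k p (by rw [pow_zero]; exact Submodule.one_le.1 le_rfl) _
  induction n generalizing t with
  | zero => exact grT_zero_rep k p h2 c 0 ht h1
  | succ n ih =>
    rw [filtT] at ht
    obtain ⟨a, ha, b, hb, rfl⟩ := Submodule.mem_sup.1 ht
    rw [map_add]
    refine add_mem (SubM_mono k p (Nat.le_succ n) (ih ha)) ?_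
    have := grT_rep k p h2 c (n+1) 0 hb h1
    rwa [zero_add] at this


lemma F_mem (c : k) (F : AA k →ₐ[k] HP k (GG p) (VV k) (ρ2 k p) (c • lam8 k p) 0 0)
    (hF : ∀ u, F (vlin k u) = vH k p _ 0 0 u) (n : ℕ) {f : AA k} (hf : f ∈ PP k ^ n) :
    F f ∈ filtP k _ _ (ρ2 k p) (c • lam8 k p) 0 0 n := by
  induction n generalizing f with
  | zero =>
    rw [pow_zero] at hf
    obtain ⟨a, rfl⟩ := Submodule.mem_one.1 hf
    rw [AlgHom.commutes, Algebra.algebraMap_eq_smul_one]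
    exact Submodule.smul_mem _ _ ⟨1, one_mem_filtT _ _ _ _, map_one (toHP k _ _ _ _ _ _)⟩
  | succ n ih =>
    rw [pow_succ] at hf
    refine Submodule.mul_induction_on hf ?_ ?_
    · intro a ha b hb
      obtain ⟨t, ht, hta⟩ := ih ha
      obtain ⟨b1, hb1, _, ⟨u, rfl⟩, rfl⟩ := Submodule.mem_sup.1 hb
      obtain ⟨r, rfl⟩ := Submodule.mem_one.1 hb1
      rw [mul_add, map_add]
      refine add_mem ?_ ?_
      · rw [← Algebra.commutes, ← Algebra.smul_def, map_smul]
        refine Submodule.smul_mem _ _ ⟨t, Submodule.mem_sup_left ht, hta⟩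
      · refine ⟨t * (vIn k _ _ u * 1), filtT_mulV _ _ _ n (Submodule.mul_mem_mul ht (Submodule.mul_mem_mul ⟨u, rfl⟩
          (Submodule.one_le.1 (one_le_grT0 k _ _)))), ?_⟩
        rw [mul_one, AlgHom.toLinearMap_apply, map_mul, map_mul, hF, ← hta]
        rfl
    · intro x y hx hy
      rw [map_add]; exact add_mem hx hy

lemma psi_mem (c : k) (F : AA k →ₐ[k] HP k (GG p) (VV k) (ρ2 k p) (c • lam8 k p) 0 0)
    (hF : ∀ u, F (vlin k u) = vH k p _ 0 0 u) (n : ℕ) {m : MM k p} (hm : m ∈ SubM k p n) :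
    psi k p c F m ∈ filtP k _ _ (ρ2 k p) (c • lam8 k p) 0 0 n := by
  refine SubM_induction k p _ _ (fun x f hf => ?_) hm
  rw [psi_single]
  obtain ⟨t, ht, h⟩ := F_mem k p c F hF n hf
  refine ⟨t * gIn k _ _ (MonoidAlgebra.of k _ x), ?_, ?_⟩
  · have := Submodule.mul_mem_mul ht (gIn_mem k (GG p) (VV k) (MonoidAlgebra.of k _ x))
    rwa [filtT_mul0] at this
  · rw [AlgHom.toLinearMap_apply, map_mul, ← h]; rfl

lemma filtP_map_ev (h2 : (2 : k) ≠ 0) (c : k) (d : ℕ) :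
    (filtP k _ _ (ρ2 k p) (c • lam8 k p) 0 0 d).map (ev k p h2 c) = SubM k p d := by
  apply le_antisymm
  · rintro _ ⟨_, ⟨t, ht, rfl⟩, rfl⟩
    rw [AlgHom.toLinearMap_apply, ev_toHP]
    exact filtT_rep k p h2 c d ht
  · intro m hm
    obtain ⟨F, hF⟩ := exists_F2 k p (c • lam8 k p)
    exact ⟨_, psi_mem k p c F hF d hm, ev_psi k p h2 c F hF m⟩

lemma finrank_filtP (h2 : (2 : k) ≠ 0) (c : k) (d : ℕ) (lam) (hl : lam = c • lam8 k p) :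
    Module.finrank k (filtP k _ _ (ρ2 k p) lam 0 0 d) = Module.finrank k (SubM k p d) := by
  subst hl
  rw [← filtP_map_ev k p h2 c d]
  exact (LinearEquiv.finrank_eq (Submodule.equivMapOfInjective _ (ev_injective k p h2 c) _))

lemma two_ne (hp : 2 < p) : (2 : k) ≠ 0 := by
  intro h
  have := (CharP.cast_eq_zero_iff k p 2).1 (by exact_mod_cast h)
  exact absurd (Nat.le_of_dvd (by norm_num) this) (by omega)

lemma part1 (hp : 2 < p) : IsPBWP k (GG p) (VV k) (ρ2 k p) (lam8 k p) 0 0 := by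
  intro d
  rw [finrank_filtP k p (two_ne k p hp) 1 d _ (one_smul _ _).symm]
  rw [finrank_filtP k p (two_ne k p hp) 0 d _ (zero_smul _ _).symm]

section gen2
variable (κC : VV k →ₗ[k] VV k →ₗ[k] MonoidAlgebra k (GG p))
    (κL : VV k →ₗ[k] VV k →ₗ[k] (VV k ⊗[k] MonoidAlgebra k (GG p)))

def Phi : MonoidAlgebra k (GG p) →ₐ[k] HP k (GG p) (VV k) (ρ2 k p) 0 κC κL :=
  MonoidAlgebra.lift k _ (GG p) ⟨⟨gH k p 0 κC κL, gH_one k p 0 κC κL⟩, gH_mul k p 0 κC κL⟩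

lemma Phi_of (x) : Phi k p κC κL (MonoidAlgebra.of k _ x) = gH k p 0 κC κL x := by
  rw [Phi, MonoidAlgebra.lift_of]; rfl

lemma Phi_eq (a) : Phi k p κC κL a = toHP k _ _ _ _ _ _ (gIn k _ _ a) := by
  induction a using MonoidAlgebra.induction_linear with
  | zero => simp
  | add f g hf hg => simp only [map_add, hf, hg]
  | single x r =>
      rw [MonoidAlgebra.single_eq_algebraMap_mul_of, Algebra.algebraMap_eq_smul_one, smul_mul_assoc, one_mul,
          map_smul, map_smul, map_smul, Phi_of]
      rfl

def Psi : VV k ⊗[k] MonoidAlgebra k (GG p) →ₗ[k] HP k (GG p) (VV k) (ρ2 k p) 0 κC κL :=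
  (LinearMap.mul' k _).comp (TensorProduct.map (vH k p 0 κC κL) (Phi k p κC κL).toLinearMap)

lemma Psi_tmul (u a) : Psi k p κC κL (u ⊗ₜ a) = vH k p 0 κC κL u * Phi k p κC κL a := by
  simp [Psi]

lemma Phi_mul_Psi (a t) : Phi k p κC κL a * Psi k p κC κL t ∈ LinearMap.range (Psi k p κC κL) := by
  induction t using TensorProduct.induction_on with
  | zero => simp
  | add x y hx hy => rw [map_add, mul_add]; exact add_mem hx hy
  | tmul u b =>
    induction a using MonoidAlgebra.induction_linear with
    | zero => simp
    | add f g hf hg => rw [map_add, add_mul]; exact add_mem hf hg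
    | single x r =>
      rw [MonoidAlgebra.single_eq_algebraMap_mul_of, Algebra.algebraMap_eq_smul_one, smul_mul_assoc, one_mul,
          map_smul, smul_mul_assoc]
      refine Submodule.smul_mem _ _ ⟨ρ2 k p x u ⊗ₜ (MonoidAlgebra.of k _ x * b), ?_⟩
      rw [Psi_tmul, Psi_tmul, map_mul, Phi_of, ← mul_assoc, ← mul_assoc, gH_vH]
      simp

lemma Psi_mul_Phi (a t) : Psi k p κC κL t * Phi k p κC κL a ∈ LinearMap.range (Psi k p κC κL) := by
  induction t using TensorProduct.induction_on with
  | zero => simp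
  | add x y hx hy => rw [map_add, add_mul]; exact add_mem hx hy
  | tmul u b => exact ⟨u ⊗ₜ (b * a), by rw [Psi_tmul, Psi_tmul, map_mul, mul_assoc]⟩

lemma grT0_Phi {t : FreeAlg k (GG p) (VV k)} (ht : t ∈ grT k (GG p) (VV k) 0) :
    ∃ a, toHP k _ _ (ρ2 k p) 0 κC κL t = Phi k p κC κL a := by
  rw [grT_zero, Subalgebra.mem_toSubmodule] at ht
  have : Algebra.adjoin k (Set.range (gIn k (GG p) (VV k))) ≤
      (Phi k p κC κL).range.comap (toHP k _ _ (ρ2 k p) 0 κC κL) := by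
    refine Algebra.adjoin_le ?_
    rintro _ ⟨a, rfl⟩
    exact ⟨a, Phi_eq k p κC κL a⟩
  obtain ⟨a, ha⟩ := this ht
  exact ⟨a, ha.symm⟩

lemma filt1_le : filtP k _ _ (ρ2 k p) 0 κC κL 1 ≤
    LinearMap.range (Phi k p κC κL).toLinearMap ⊔ LinearMap.range (Psi k p κC κL) := by
  rintro _ ⟨t, ht, rfl⟩
  rw [filtT] at ht
  obtain ⟨a, ha, b, hb, rfl⟩ := Submodule.mem_sup.1 ht
  rw [map_add]
  refine add_mem (Submodule.mem_sup_left ?_) (Submodule.mem_sup_right ?_)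
  · obtain ⟨s, hs⟩ := grT0_Phi k p κC κL ha
    exact ⟨s, hs.symm⟩
  · rw [grT_succ] at hb
    refine Submodule.mul_induction_on hb ?_ (fun x y hx hy => by rw [map_add]; exact add_mem hx hy)
    intro x hx y hy
    obtain ⟨s, hs⟩ := grT0_Phi k p κC κL hx
    refine Submodule.mul_induction_on hy ?_ (fun x y hx hy => by rw [mul_add, map_add]; exact add_mem hx hy)
    rintro _ ⟨u, rfl⟩ z hz
    obtain ⟨r, hr⟩ := grT0_Phi k p κC κL hz
    rw [AlgHom.toLinearMap_apply, map_mul, map_mul, hs, hr]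
    have := Phi_mul_Psi k p κC κL s (u ⊗ₜ r)
    rwa [Psi_tmul] at this

end gen2

def Lmap : (k × VV k) →ₗ[k] AA k := LinearMap.coprod (Algebra.linearMap k (AA k)) (vlin k)

lemma Lmap_inj : Function.Injective (Lmap k) := by
  rw [injective_iff_map_eq_zero]
  rintro ⟨a, u⟩ h
  have h' : MvPolynomial.C a + (u 0 • MvPolynomial.X 0 + u 1 • MvPolynomial.X 1) = (0 : AA k) := by
    simpa [Lmap, vlin, MvPolynomial.algebraMap_eq] using h
  have ha : a = 0 := by
    have := congrArg (MvPolynomial.eval ![0, 0]) h'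
    simpa using this
  have h0 : u 0 = 0 := by
    have := congrArg (MvPolynomial.eval ![1, 0]) h'
    simpa [ha] using this
  have h1 : u 1 = 0 := by
    have := congrArg (MvPolynomial.eval ![0, 1]) h'
    simpa [ha] using this
  ext i
  · exact ha
  · fin_cases i
    · exact h0
    · exact h1

instance : Fintype (GG p) := inferInstanceAs (Fintype (ZMod p))

lemma card_GG : Fintype.card (GG p) = p := ZMod.card p

lemma fin_kG : Module.Finite k (MonoidAlgebra k (GG p)) :=
  Module.Finite.equiv (MonoidAlgebra.coeffLinearEquiv k).symm

lemma rk_kG : Module.finrank k (MonoidAlgebra k (GG p)) = p := by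
  rw [LinearEquiv.finrank_eq (MonoidAlgebra.coeffLinearEquiv k), Module.finrank_finsupp_self, card_GG]


section gen3
variable (κC : VV k →ₗ[k] VV k →ₗ[k] MonoidAlgebra k (GG p))
    (κL : VV k →ₗ[k] VV k →ₗ[k] (VV k ⊗[k] MonoidAlgebra k (GG p)))

lemma abs_inf {H W1 W2 : Type} [AddCommGroup H] [Module k H] [AddCommGroup W1] [Module k W1]
    [AddCommGroup W2] [Module k W2] [Module.Finite k W1] [Module.Finite k W2] (f : W1 →ₗ[k] H) (g : W2 →ₗ[k] H)
    {W3 : Type} [AddCommGroup W3] [Module k W3] (T : W3 →ₗ[k] H) (hT : Function.Injective T)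
    (hr : Module.finrank k W1 + Module.finrank k W2 ≤ Module.finrank k W3)
    (hm : ∀ x, T x ∈ LinearMap.range f ⊔ LinearMap.range g) :
    LinearMap.range f ⊓ LinearMap.range g = ⊥ := by
  have h1 := LinearMap.finrank_range_le f
  have h2 := LinearMap.finrank_range_le g
  have h3 := LinearMap.finrank_le_finrank_of_injective
    (f := T.codRestrict (LinearMap.range f ⊔ LinearMap.range g) hm)
      (fun x y h => hT (congrArg Subtype.val h))
  have h4 := Submodule.finrank_sup_add_finrank_inf_eq (LinearMap.range f) (LinearMap.range g)
  exact Submodule.finrank_eq_zero.1 (by omega)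

lemma abs_ring {R : Type} [Ring R] [Algebra k R] {g v a s : R} (B : Submodule k R) (hrel : g * v = v * g + g)
    (hv : a + s = v) (hc : g * a = a * g) (h1 : g * s ∈ B) (h2 : s * g ∈ B) : g ∈ B := by
  have : g = g * s - s * g := by
    have h7 : g = g * v - v * g := by rw [hrel]; abel
    rw [← hv, mul_add, add_mul, hc] at h7
    exact h7.trans (by abel)
  rw [this]
  exact sub_mem h1 h2

lemma rk_sum : Module.finrank k (MonoidAlgebra k (GG p)) +
    Module.finrank k (VV k ⊗[k] MonoidAlgebra k (GG p)) ≤ Module.finrank k (GG p →₀ (k × VV k)) := by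
  have := fin_kG k p
  rw [Module.finrank_tensorProduct, rk_kG, Module.finrank_finsupp, card_GG]
  simp
  linarith

lemma inf_bot (h2 : (2 : k) ≠ 0)
    (e : HP k (GG p) (VV k) (ρ2 k p) ((1 : k) • lam8 k p) 0 0 →ₗ[k] HP k (GG p) (VV k) (ρ2 k p) 0 κC κL)
    (hi : Function.Injective e)
    (he : ∀ h ∈ filtP k (GG p) (VV k) (ρ2 k p) ((1 : k) • lam8 k p) 0 0 1,
      e h ∈ filtP k (GG p) (VV k) (ρ2 k p) 0 κC κL 1) :
    LinearMap.range (Phi k p κC κL).toLinearMap ⊓ LinearMap.range (Psi k p κC κL) = ⊥ := by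
  obtain ⟨F, hF⟩ := exists_F2 k p ((1 : k) • lam8 k p)
  have := fin_kG k p
  refine abs_inf k _ _ (e.comp ((psi k p 1 F).comp (Finsupp.mapRange.linearMap (Lmap k)))) ?_ (rk_sum k p) ?_
  · rw [LinearMap.coe_comp, LinearMap.coe_comp]
    refine hi.comp (Function.Injective.comp
      (Function.LeftInverse.injective (ev_psi k p h2 1 F hF)) ?_)
    exact Finsupp.mapRange_injective _ (map_zero _) (Lmap_inj k)
  · intro x
    apply filt1_le
    refine he _ (psi_mem k p 1 F hF 1 ?_)
    intro y
    rw [Finsupp.mapRange.linearMap_apply, Finsupp.mapRange_apply, pow_one, Lmap, LinearMap.coprod_apply]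
    exact add_mem (Submodule.mem_sup_left (Submodule.mem_one.2 ⟨_, rfl⟩)) (Submodule.mem_sup_right ⟨_, rfl⟩)

lemma rel8 : gH k p ((1:k) • lam8 k p) 0 0 (gg p) * vH k p ((1:k) • lam8 k p) 0 0 (Pi.single 0 1) =
    vH k p ((1:k) • lam8 k p) 0 0 (Pi.single 0 1) * gH k p ((1:k) • lam8 k p) 0 0 (gg p)
     + gH k p ((1:k) • lam8 k p) 0 0 (gg p) := by
  have hcf : cf k p (gg p) = 1 := by simp [cf, gg]
  have hρ : ρ2 k p (gg p) (Pi.single 0 1) = Pi.single 0 1 := by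
    rw [ρ2_apply]; funext i; fin_cases i <;> simp
  have hl : ((1:k) • lam8 k p) (gg p) (Pi.single 0 1) = MonoidAlgebra.of k _ (gg p) := by
    rw [one_smul, lam8_apply, hcf]; simp
  rw [gH_vH, hρ, hl]
  rfl

lemma v_mem1 : vH k p ((1:k) • lam8 k p) 0 0 (Pi.single 0 1) ∈
    filtP k (GG p) (VV k) (ρ2 k p) ((1 : k) • lam8 k p) 0 0 1 := by
  obtain ⟨F, hF⟩ := exists_F2 k p ((1 : k) • lam8 k p)
  rw [← hF]
  exact F_mem k p 1 F hF 1 (by rw [pow_one]; exact Submodule.mem_sup_right ⟨_, rfl⟩)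

lemma g_mem0 : gH k p ((1:k) • lam8 k p) 0 0 (gg p) ∈
    filtP k (GG p) (VV k) (ρ2 k p) ((1 : k) • lam8 k p) 0 0 0 :=
  ⟨_, by rw [filtT]; exact gIn_mem k _ _ _, rfl⟩

lemma g_ne (h2 : (2 : k) ≠ 0) : gH k p ((1:k) • lam8 k p) 0 0 (gg p) ≠ 0 := by
  intro h
  have hev : ev k p h2 1 (gH k p ((1:k) • lam8 k p) 0 0 (gg p)) = Finsupp.single (gg p) 1 := by
    rw [gH, ev_toHP, freeRep_of, Top_single]; simp
  rw [h, map_zero] at hev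
  exact one_ne_zero (Finsupp.single_eq_zero.1 hev.symm)

lemma filt0_Phi {h} (hh : h ∈ filtP k (GG p) (VV k) (ρ2 k p) 0 κC κL 0) : ∃ a, Phi k p κC κL a = h := by
  obtain ⟨t, ht, rfl⟩ := hh
  rw [filtT] at ht
  obtain ⟨a, ha⟩ := grT0_Phi k p κC κL ht
  exact ⟨a, ha.symm⟩

lemma core {g v : HP k (GG p) (VV k) (ρ2 k p) 0 κC κL} (hrel : g * v = v * g + g)
    (hg : g ∈ filtP k (GG p) (VV k) (ρ2 k p) 0 κC κL 0) (hv : v ∈ filtP k (GG p) (VV k) (ρ2 k p) 0 κC κL 1)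
    (h6 : LinearMap.range (Phi k p κC κL).toLinearMap ⊓ LinearMap.range (Psi k p κC κL) = ⊥) : g = 0 := by
  obtain ⟨a, rfl⟩ := filt0_Phi k p κC κL hg
  obtain ⟨_, ⟨b, rfl⟩, _, ⟨s, rfl⟩, hvs⟩ := Submodule.mem_sup.1 (filt1_le k p κC κL hv)
  have hB := abs_ring k (LinearMap.range (Psi k p κC κL)) hrel hvs
    (by rw [AlgHom.toLinearMap_apply, ← map_mul, mul_comm, map_mul])
    (Phi_mul_Psi k p κC κL a s) (Psi_mul_Phi k p κC κL a s)
  have : Phi k p κC κL a ∈ LinearMap.range (Phi k p κC κL).toLinearMap ⊓ LinearMap.range (Psi k p κC κL) :=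
    ⟨⟨a, rfl⟩, hB⟩
  rwa [h6, Submodule.mem_bot] at this

lemma part2 (hp : 2 < p) (lam) (hl : lam = (1 : k) • lam8 k p)
    (e : HP k (GG p) (VV k) (ρ2 k p) lam 0 0 ≃ₐ[k] HP k (GG p) (VV k) (ρ2 k p) 0 κC κL)
    (he : ∀ d, Submodule.map (e.toLinearEquiv : _ →ₗ[k] _) (filtP k (GG p) (VV k) (ρ2 k p) lam 0 0 d)
          = filtP k (GG p) (VV k) (ρ2 k p) 0 κC κL d) : False := by
  subst hl
  have h2 := two_ne k p hp
  have hm : ∀ d, ∀ h ∈ filtP k (GG p) (VV k) (ρ2 k p) ((1 : k) • lam8 k p) 0 0 d,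
      e h ∈ filtP k (GG p) (VV k) (ρ2 k p) 0 κC κL d := by
    intro d h hh
    rw [← he d]
    exact Submodule.mem_map_of_mem hh
  have h6 := inf_bot k p κC κL h2 (e.toLinearEquiv : _ →ₗ[k] _) e.injective (hm 1)
  have hrel := congrArg e (rel8 k p)
  rw [map_add, map_mul, map_mul] at hrel
  have h0 := core k p κC κL hrel (hm 0 _ (g_mem0 k p)) (hm 1 _ (v_mem1 k p)) h6
  exact g_ne k p h2 ((map_eq_zero_iff e e.injective).1 h0)

end gen3
end Pf
end DeformKoszul

open DeformKoszul

/-- **Example 5.3 and Remark 6.2** of Shepler–Witherspoon, "Deforming group actions on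
Koszul algebras": in characteristic `p > 2`, for the cyclic group `G = ⟨g⟩` of order
`p` acting on `V = kv ⊕ kw` by `ᵍv = v`, `ᵍw = v + w`, and the parameters
`λ(gⁱ, v) = i gⁱ`, `λ(1,w) = λ(g,w) = 0`, `λ(gⁱ,w) = (i choose 2) gⁱ`:
the algebra `H_{λ,0}` is a PBW deformation of `S(V) ⋊ G`, but there is **no** bilinear
parameter `κ' = κ'^C + κ'^L : V × V → kG ⊕ (V ⊗ kG)` with `H_{λ,0} ≅ H_{0,κ'}` as
filtered algebras.  Hence the nonmodular untwisting theorem fails in the modular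
setting. -/
theorem modular_deformation_cannot_be_untwisted
    (k : Type) [Field k] (p : ℕ) [Fact p.Prime] (hp : 2 < p) [CharP k p] :
    IsPBWP k (Multiplicative (ZMod p)) (Fin 2 → k) (ρ2 k p) (lam8 k p) 0 0 ∧
    ¬ ∃ (κC' : (Fin 2 → k) →ₗ[k] (Fin 2 → k) →ₗ[k] MonoidAlgebra k (Multiplicative (ZMod p)))
        (κL' : (Fin 2 → k) →ₗ[k] (Fin 2 → k) →ₗ[k]
          ((Fin 2 → k) ⊗[k] MonoidAlgebra k (Multiplicative (ZMod p))))
        (e : HP k (Multiplicative (ZMod p)) (Fin 2 → k) (ρ2 k p) (lam8 k p) 0 0 ≃ₐ[k]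
          HP k (Multiplicative (ZMod p)) (Fin 2 → k) (ρ2 k p) 0 κC' κL'),
        ∀ d, Submodule.map (e.toLinearEquiv : _ →ₗ[k] _)
            (filtP k (Multiplicative (ZMod p)) (Fin 2 → k) (ρ2 k p) (lam8 k p) 0 0 d)
          = filtP k (Multiplicative (ZMod p)) (Fin 2 → k) (ρ2 k p) 0 κC' κL' d := by
  refine ⟨part1 k p hp, ?_⟩
  rintro ⟨κC, κL, e, he⟩
  exact part2 k p κC κL hp _ (one_smul _ _).symm e he
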